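/- If f(x) = 2x(1+x*x)^{-1} on a C*-algebra, then for any contraction Z with ‖Z‖ ≤ 1 there exists X (namely X = (1+(1−ZZ*)^{1/2})^{-1}Z) with f(X) = Z; moreover ‖f(Y)‖ ≤ 1 for all Y. -/

import Mathlib

/-!
With `f x = 2 x (1 + x* x)⁻¹` and `c = (1 - y* y)(1 + y* y)⁻¹`, the scalar identity
`4 t + (1 - t)² = (1 + t)²` at `t = y* y` gives `f(y)* f(y) + c* c = 1`, hence `‖f y‖ ≤ 1`.

Conversely, let `s = (1 - z z*)^{1/2}` and `(1 + s) x = z`. Then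
`(1 + s)(1 + x x*)(1 + s) = (1 + s)² + z z* = 2 (1 + s)`, so `(1 + x x*)(1 + s) = 2`, and applying
this to `x` gives `(1 + x x*) z = 2 x`.
-/

section Ring

variable {R : Type*} [Ring R]

theorem isUnit_one_add_mul_swap {a b : R} (h : IsUnit (1 + a * b)) : IsUnit (1 + b * a) := by
  obtain ⟨r, hr, hr'⟩ := isUnit_iff_exists.mp h
  refine isUnit_iff_exists.mpr ⟨1 - b * r * a, ?_, ?_⟩
  · calc (1 + b * a) * (1 - b * r * a) = 1 + b * a - b * ((1 + a * b) * r) * a := by noncomm_ring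
      _ = 1 := by rw [hr, mul_one, add_sub_cancel_right]
  · calc (1 - b * r * a) * (1 + b * a) = 1 + b * a - b * (r * (1 + a * b)) * a := by noncomm_ring
      _ = 1 := by rw [hr', mul_one, add_sub_cancel_right]

theorem mul_inverse_one_add_mul (a b : R) :
    a * Ring.inverse (1 + b * a) = Ring.inverse (1 + a * b) * a := by
  by_cases hab : IsUnit (1 + a * b)
  · have hba : IsUnit (1 + b * a) := isUnit_one_add_mul_swap hab
    rw [eq_comm, Ring.inverse_mul_eq_iff_eq_mul _ _ _ hab, ← mul_assoc,
      Ring.eq_mul_inverse_iff_mul_eq _ _ _ hba]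
    noncomm_ring
  · have hba : ¬IsUnit (1 + b * a) := fun h ↦ hab (isUnit_one_add_mul_swap h)
    rw [Ring.inverse_non_unit _ hab, Ring.inverse_non_unit _ hba, mul_zero, zero_mul]

end Ring

section StarRing

variable {R : Type*} [Ring R] [StarRing R]

theorem star_mul_self_two_mul_mul_inverse_add_star_mul_self_eq_one {y : R}
    (hy : IsUnit (1 + star y * y)) :
    star (2 * (y * Ring.inverse (1 + star y * y))) * (2 * (y * Ring.inverse (1 + star y * y))) +
      star ((1 - star y * y) * Ring.inverse (1 + star y * y)) *
        ((1 - star y * y) * Ring.inverse (1 + star y * y)) = 1 := by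
  set r := Ring.inverse (1 + star y * y) with hr
  have hr_star : star r = r := by simp [hr, ← Ring.inverse_star]
  calc _ = r * (1 + star y * y) * ((1 + star y * y) * r) := by
        simp only [star_mul, star_sub, star_one, star_star, star_ofNat, hr_star]
        noncomm_ring
    _ = 1 := by rw [Ring.inverse_mul_cancel _ hy, Ring.mul_inverse_cancel _ hy, one_mul]

theorem one_add_mul_star_self_mul_one_add {s x z : R} (hs : IsSelfAdjoint s)
    (hsz : s * s = 1 - z * star z) (h_reg : IsLeftRegular (1 + s)) (hx : (1 + s) * x = z) :
    (1 + x * star x) * (1 + s) = 2 := by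
  have hx_star : star x * (1 + s) = star z := by
    rw [← hx, star_mul, star_add, star_one, hs.star_eq]
  refine h_reg ?_
  calc (1 + s) * ((1 + x * star x) * (1 + s))
      = (1 + s) * (1 + s) + (1 + s) * x * (star x * (1 + s)) := by noncomm_ring
    _ = 1 + 2 * s + s * s + z * star z := by rw [hx, hx_star]; noncomm_ring
    _ = (1 + s) * 2 := by rw [hsz]; noncomm_ring

theorem two_mul_inverse_one_add_mul_star_self_mul (h2 : IsUnit (2 : R)) {s x z : R}
    (hs : IsSelfAdjoint s) (hsz : s * s = 1 - z * star z) (hu : IsUnit (1 + s))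
    (hx : (1 + s) * x = z) :
    2 * (Ring.inverse (1 + x * star x) * x) = z := by
  have h_two := one_add_mul_star_self_mul_one_add hs hsz hu.isRegular.left hx
  have h_unit : IsUnit (1 + x * star x) := hu.mul_right_iff.mp (h_two ▸ h2)
  have h_two_mul : (1 + x * star x) * z = 2 * x := by rw [← hx, ← mul_assoc, h_two]
  calc 2 * (Ring.inverse (1 + x * star x) * x)
      = Ring.inverse (1 + x * star x) * (2 * x) := by noncomm_ring
    _ = z := by rw [← h_two_mul, Ring.inverse_mul_cancel_left _ _ h_unit]

end StarRing

section CStarAlgebra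

variable {A : Type*} [CStarAlgebra A]

theorem norm_le_one_iff_star_mul_self_le_one [PartialOrder A] [StarOrderedRing A] {a : A} :
    ‖a‖ ≤ 1 ↔ star a * a ≤ 1 := by
  rw [← CStarAlgebra.norm_le_one_iff_of_nonneg _ (star_mul_self_nonneg a),
    CStarRing.norm_star_mul_self, ← sq, sq_le_one_iff₀ (norm_nonneg a)]

theorem isUnit_one_add_of_nonneg [PartialOrder A] [StarOrderedRing A] {a : A} (ha : 0 ≤ a) :
    IsUnit (1 + a) :=
  CStarAlgebra.isUnit_of_le 1 (le_add_of_nonneg_right ha)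

theorem isUnit_one_add_star_mul_self (a : A) : IsUnit (1 + star a * a) := by
  let := CStarAlgebra.spectralOrder A
  have := CStarAlgebra.spectralOrderedRing A
  exact isUnit_one_add_of_nonneg (star_mul_self_nonneg a)

theorem norm_le_one_of_star_mul_self_add_star_mul_self_eq_one {a b : A}
    (h : star a * a + star b * b = 1) : ‖a‖ ≤ 1 := by
  let := CStarAlgebra.spectralOrder A
  have := CStarAlgebra.spectralOrderedRing A
  rw [norm_le_one_iff_star_mul_self_le_one, ← h]
  exact le_add_of_nonneg_right (star_mul_self_nonneg b)

theorem norm_two_mul_mul_inverse_one_add_star_mul_self_le_one (y : A) :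
    ‖2 * (y * Ring.inverse (1 + star y * y))‖ ≤ 1 :=
  norm_le_one_of_star_mul_self_add_star_mul_self_eq_one
    (star_mul_self_two_mul_mul_inverse_add_star_mul_self_eq_one (isUnit_one_add_star_mul_self y))

theorem sqrt_one_sub_mul_star_self_mul_self [PartialOrder A] [StarOrderedRing A] {z : A}
    (hz : ‖z‖ ≤ 1) :
    CFC.sqrt (1 - z * star z) * CFC.sqrt (1 - z * star z) = 1 - z * star z := by
  have h_le : z * star z ≤ 1 := by
    simpa using norm_le_one_iff_star_mul_self_le_one.mp ((norm_star z).trans_le hz)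
  exact CFC.sqrt_mul_sqrt_self _ (sub_nonneg.mpr h_le)

end CStarAlgebra

/-- For `f(x) = 2x(1+x*x)⁻¹` on a unital C*-algebra, any contraction `Z` with
`‖Z‖ ≤ 1` is of the form `f(X)` with `X = (1+(1−ZZ*)^{1/2})⁻¹ Z`; moreover
`‖f(Y)‖ ≤ 1` for all `Y`. -/
theorem contraction_in_range_of_f
    {M : Type*} [CStarAlgebra M] [PartialOrder M] [StarOrderedRing M]
    [NormedAlgebra ℂ M] [StarModule ℂ M]
    (Z : M) (hZ : ‖Z‖ ≤ 1)
    (X : M) (hX : X = Ring.inverse (1 + CFC.sqrt (1 - Z * star Z)) * Z) :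
    2 * (X * Ring.inverse (1 + star X * X)) = Z ∧
    2 * (Ring.inverse (1 + X * star X) * X) = Z ∧
    ∀ Y : M, ‖2 * (Y * Ring.inverse (1 + star Y * Y))‖ ≤ 1 := by
  have h_sqrt_nonneg : 0 ≤ CFC.sqrt (1 - Z * star Z) := CFC.sqrt_nonneg _
  have h_unit : IsUnit (1 + CFC.sqrt (1 - Z * star Z)) := isUnit_one_add_of_nonneg h_sqrt_nonneg
  have h_two : IsUnit (2 : M) := one_add_one_eq_two (R := M) ▸ isUnit_one_add_of_nonneg zero_le_one
  have h_range : 2 * (Ring.inverse (1 + X * star X) * X) = Z :=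
    two_mul_inverse_one_add_mul_star_self_mul h_two (.of_nonneg h_sqrt_nonneg)
      (sqrt_one_sub_mul_star_self_mul_self hZ) h_unit
      (by rw [hX, Ring.mul_inverse_cancel_left _ _ h_unit])
  exact ⟨by rwa [mul_inverse_one_add_mul], h_range,
    norm_two_mul_mul_inverse_one_add_star_mul_self_le_one⟩
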